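/- arXiv:1310.0528 — 6 statements merged into one kernel-verified Lean document; each statement's English description precedes it below -/
import Mathlib

section
/- Let A and B be abelian categories and let f⁺ : B ⥤ A be an additive exact functor; let f̃⁺ : D⁺(B) ⥤ D⁺(A) denote the functor it induces on bounded-below derived categories. Suppose given a functor f₊ : D⁺(A) ⥤ D⁺(B) together with an adjunction f̃⁺ ⊣ f₊. Then for every object X of A, regarded as a complex concentrated in degree 0: (i) Hⁱ(f₊(X)) = 0 for all i < 0; (ii) there is a bijection, natural in Y ∈ B, Hom_A(f⁺(Y), X) ≃ Hom_B(Y, H⁰(f₊(X))). In particular, if f⁺ admits a right adjoint f⁎ : A ⥤ B at the level of abelian categories, then H⁰(f₊(X)) is naturally isomorphic to f⁎(X). -/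
open CategoryTheory CategoryTheory.Limits

universe w v u

variable (C : Type u) [Category.{v} C] [Abelian C] [HasDerivedCategory.{w} C]

/-- The property of an object of the derived category of having bounded-below cohomology;
the objects of `D⁺(C)` are the objects of `D(C)` satisfying this property. -/
def IsBoundedBelowCohomology (M : DerivedCategory C) : Prop :=
  ∃ n : ℤ, ∀ i < n, IsZero ((DerivedCategory.homologyFunctor C i).obj M)

/-- The bounded-below derived category `D⁺(C)`, regarded as the full subcategory of the
(unbounded) derived category `D(C)` of objects with bounded-below cohomology. -/
abbrev DPlus := ObjectProperty.FullSubcategory (IsBoundedBelowCohomology C)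

/-- The inclusion `D⁺(C) ⥤ D(C)` of the bounded-below derived category as a full
subcategory of the unbounded derived category. -/
noncomputable abbrev DPlusIncl : DPlus C ⥤ DerivedCategory C := ObjectProperty.ι _

lemma singleFunctor_mem_isBoundedBelowCohomology (X : C) :
    IsBoundedBelowCohomology C ((DerivedCategory.singleFunctor C 0).obj X) := by
  refine ⟨0, fun i hi => ?_⟩
  have e1 : (DerivedCategory.singleFunctor C 0).obj X ≅
      DerivedCategory.Q.obj ((HomologicalComplex.single C (ComplexShape.up ℤ) 0).obj X) :=
    ((SingleFunctors.evaluation _ _ 0).mapIso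
      (DerivedCategory.singleFunctorsPostcompQIso C)).app X
  refine IsZero.of_iso ?_ ((DerivedCategory.homologyFunctor C i).mapIso e1 ≪≫
    (DerivedCategory.homologyFunctorFactors C i).app _)
  exact HomologicalComplex.isZero_single_obj_homology _ _ X i (by omega)

/-- The functor `C ⥤ D⁺(C)` sending an object to the associated complex concentrated in
degree `0`. -/
noncomputable def singleDPlus : C ⥤ DPlus C :=
  ObjectProperty.lift _ (DerivedCategory.singleFunctor C 0)
    (singleFunctor_mem_isBoundedBelowCohomology C)

/-!
The functor induced by an exact functor preserves `D^{≤ n}` and `D^{≥ n}`, so by orthogonality its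
right adjoint preserves `D^{≥ n}`, which gives the vanishing in negative degrees. The adjunction
therefore restricts to the subcategories `D^{≥ 0}`. On `D^{≥ 0}(B)`, the functor `H⁰` is right
adjoint to the embedding of `B`, because `τ^{≤ 0} K` is `H⁰(K)` placed in degree `0`. Composing the
two adjunctions and restricting along the full embedding of `A` into `D^{≥ 0}(A)` shows that
`X ↦ H⁰(f₊ X)` is right adjoint to `f⁺`.
-/

section TStructure

open Pretriangulated Triangulated

variable {T T' : Type*} [Category T] [Category T']
  [Preadditive T] [HasZeroObject T] [HasShift T ℤ] [∀ n : ℤ, (shiftFunctor T n).Additive]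
  [Pretriangulated T]
  [Preadditive T'] [HasZeroObject T'] [HasShift T' ℤ] [∀ n : ℤ, (shiftFunctor T' n).Additive]
  [Pretriangulated T']
  (t : TStructure T) (t' : TStructure T')

lemma isGE_rightAdjoint_obj {F : T ⥤ T'} {G : T' ⥤ T} (adj : F ⊣ G) (m n : ℤ) (hmn : m + 1 = n)
    (hF : ∀ M : T, t.IsLE M m → t'.IsLE (F.obj M) m) (N : T') [t'.IsGE N n] :
    t.IsGE (G.obj N) n := by
  rw [t.isGE_iff_orthogonal m n hmn]
  intro M g hM
  have := hF M hM
  have eq_zero (f : F.obj M ⟶ N) : f = 0 := t'.zero f m n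
  exact (adj.homEquiv M N).symm.injective ((eq_zero _).trans (eq_zero _).symm)

lemma comp_truncLEι_bijective (n : ℤ) (M N : T) [t.IsLE M n] :
    Function.Bijective fun f : M ⟶ (t.truncLE n).obj N ↦ f ≫ (t.truncLEι n).app N :=
  ⟨fun _ _ h ↦ t.to_truncLE_obj_ext h, fun f ↦ ⟨t.liftTruncLE f n, t.liftTruncLE_ι f n⟩⟩

end TStructure

section Homology

open DerivedCategory

variable {C}

lemma isIso_homologyFunctor_map_truncLEι (K : DerivedCategory C) (i n : ℤ) (hi : i ≤ n) :
    IsIso ((homologyFunctor C i).map ((TStructure.t.truncLEι n).app K)) := by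
  have triangle_mem := TStructure.t.triangleLEGT_distinguished n K
  have : ((TStructure.t.triangleLEGT n).obj K).obj₃.IsGE (n + 1) :=
    inferInstanceAs (((TStructure.t.truncGT n).obj K).IsGE (n + 1))
  have : Mono ((homologyFunctor C i).map ((TStructure.t.truncLEι n).app K)) :=
    (HomologySequence.mono_homologyMap_mor₁_iff _ triangle_mem (i - 1) i).2
      ((isZero_of_isGE _ (n + 1) (i - 1) (by lia)).eq_of_src _ _)
  have : Epi ((homologyFunctor C i).map ((TStructure.t.truncLEι n).app K)) :=
    (HomologySequence.epi_homologyMap_mor₁_iff _ triangle_mem i).2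
      ((isZero_of_isGE _ (n + 1) i (by lia)).eq_of_tgt _ _)
  exact isIso_of_mono_of_epi _

lemma homologyFunctor_map_bijective_of_singleFunctor (n : ℤ) (Y W : C) :
    Function.Bijective fun f : (singleFunctor C n).obj Y ⟶ (singleFunctor C n).obj W ↦
      (homologyFunctor C n).map f := by
  let single_comp_homology : (singleFunctor C n ⋙ homologyFunctor C n).FullyFaithful :=
    (Functor.FullyFaithful.id C).ofIso (singleFunctorCompHomologyFunctorIso C n).symm
  exact (Function.Bijective.of_comp_iff _
    ((Functor.FullyFaithful.ofFullyFaithful (singleFunctor C n)).map_bijective Y W)).1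
    (single_comp_homology.map_bijective Y W)

-- For `K` in degrees `≥ n`, the truncation `τ^{≤ n} K` is concentrated in degree `n`.
lemma homologyFunctor_map_bijective_of_isGE (n : ℤ) (Y : C) (K : DerivedCategory C) [K.IsGE n] :
    Function.Bijective fun f : (singleFunctor C n).obj Y ⟶ K ↦ (homologyFunctor C n).map f := by
  have : ((TStructure.t.truncLE n).obj K).IsGE n :=
    inferInstanceAs (TStructure.t.IsGE ((TStructure.t.truncLT (n + 1)).obj K) n)
  obtain ⟨W, ⟨e⟩⟩ := exists_iso_singleFunctor_obj_of_isGE_of_isLE ((TStructure.t.truncLE n).obj K) n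
  let α : (singleFunctor C n).obj W ⟶ K := e.inv ≫ (TStructure.t.truncLEι n).app K
  have := isIso_homologyFunctor_map_truncLEι K n n le_rfl
  have : IsIso ((homologyFunctor C n).map α) := by
    rw [Functor.map_comp]
    infer_instance
  have comp_α_bijective :
      Function.Bijective fun f : (singleFunctor C n).obj Y ⟶ (singleFunctor C n).obj W ↦ f ≫ α := by
    simpa [Function.comp_def, α] using
      (comp_truncLEι_bijective TStructure.t n ((singleFunctor C n).obj Y) K).comp
        e.symm.homToEquiv.bijective
  refine (Function.Bijective.of_comp_iff _ comp_α_bijective).1 ?_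
  simpa [Function.comp_def] using
    (asIso ((homologyFunctor C n).map α)).homToEquiv.bijective.comp
      (homologyFunctor_map_bijective_of_singleFunctor n Y W)

variable (C)

/-- The full subcategory `D^{≥ n}(C)` of the derived category `D(C)`, given by the canonical
t-structure. -/
abbrev DGE (n : ℤ) := ((TStructure.t (C := C)).ge n).FullSubcategory

/-- The functor `C ⥤ D^{≥ n}(C)` sending an object to the associated complex concentrated in
degree `n`. -/
noncomputable def singleDGE (n : ℤ) : C ⥤ DGE C n :=
  ObjectProperty.lift _ (singleFunctor C n) fun _ ↦ TStructure.t.ge_of_isGE _ n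

/-- The embedding `C ⥤ D^{≥ n}(C)` is fully faithful. -/
noncomputable def fullyFaithfulSingleDGE (n : ℤ) : (singleDGE C n).FullyFaithful :=
  have : (singleDGE C n).Full := inferInstanceAs (ObjectProperty.lift _ _ _).Full
  have : (singleDGE C n).Faithful := inferInstanceAs (ObjectProperty.lift _ _ _).Faithful
  .ofFullyFaithful _

/-- The `n`-th cohomology functor on `D^{≥ n}(C)`. -/
noncomputable def homologyDGE (n : ℤ) : DGE C n ⥤ C :=
  ObjectProperty.ι _ ⋙ homologyFunctor C n

variable {C}

/-- The bijection between morphisms to an object of `D^{≥ n}(C)` from an object `Y` placed in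
degree `n`, and morphisms from `Y` to the `n`-th cohomology. -/
noncomputable def singleDGEHomEquiv (n : ℤ) (Y : C) (K : DGE C n) :
    ((singleDGE C n).obj Y ⟶ K) ≃ (Y ⟶ (homologyDGE C n).obj K) :=
  have : K.obj.IsGE n := ⟨K.property⟩
  (ObjectProperty.fullyFaithfulι _).homEquiv.trans
    ((Equiv.ofBijective _ (homologyFunctor_map_bijective_of_isGE n Y K.obj)).trans
      ((singleFunctorCompHomologyFunctorIso C n).app Y).homFromEquiv)

lemma singleDGEHomEquiv_apply (n : ℤ) (Y : C) (K : DGE C n) (g : (singleDGE C n).obj Y ⟶ K) :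
    singleDGEHomEquiv n Y K g =
      (singleFunctorCompHomologyFunctorIso C n).inv.app Y ≫ (homologyDGE C n).map g :=
  rfl

lemma singleDGEHomEquiv_naturality_left (n : ℤ) {Y' Y : C} (K : DGE C n) (f : Y' ⟶ Y)
    (g : (singleDGE C n).obj Y ⟶ K) :
    singleDGEHomEquiv n Y' K ((singleDGE C n).map f ≫ g) = f ≫ singleDGEHomEquiv n Y K g := by
  rw [singleDGEHomEquiv_apply, singleDGEHomEquiv_apply, Functor.map_comp]
  exact ((singleFunctorCompHomologyFunctorIso C n).inv.naturality_assoc f _).symm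

variable (C) in
/-- On `D^{≥ n}(C)`, placing objects in degree `n` is left adjoint to the `n`-th cohomology. -/
noncomputable def singleDGEAdjHomologyDGE (n : ℤ) : singleDGE C n ⊣ homologyDGE C n :=
  Adjunction.mkOfHomEquiv
    { homEquiv := singleDGEHomEquiv n
      homEquiv_naturality_left_symm f g := by
        rw [Equiv.symm_apply_eq, singleDGEHomEquiv_naturality_left, Equiv.apply_symm_apply]
      homEquiv_naturality_right f g := by
        rw [singleDGEHomEquiv_apply, singleDGEHomEquiv_apply, Functor.map_comp]
        exact (Category.assoc _ _ _).symm }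

end Homology

section ExactFunctor

open DerivedCategory

variable {A B : Type*} [Category A] [Category B] [Abelian A] [Abelian B]
  [HasDerivedCategory A] [HasDerivedCategory B]
  (F : B ⥤ A) [F.Additive] [PreservesFiniteLimits F] [PreservesFiniteColimits F]

/-- A functor compatible with `F` on cochain complexes is the derived functor of `F`. -/
noncomputable def mapDerivedCategoryIsoOfFactors (G : DerivedCategory B ⥤ DerivedCategory A)
    (e : F.mapHomologicalComplex (ComplexShape.up ℤ) ⋙ Q ≅ Q ⋙ G) :
    F.mapDerivedCategory ≅ G :=
  letI : Localization.Lifting Q (HomologicalComplex.quasiIso B (ComplexShape.up ℤ))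
    (F.mapHomologicalComplex (ComplexShape.up ℤ) ⋙ Q) F.mapDerivedCategory :=
      ⟨F.mapDerivedCategoryFactors⟩
  letI : Localization.Lifting Q (HomologicalComplex.quasiIso B (ComplexShape.up ℤ))
    (F.mapHomologicalComplex (ComplexShape.up ℤ) ⋙ Q) G := ⟨e.symm⟩
  Localization.liftNatIso Q (HomologicalComplex.quasiIso B (ComplexShape.up ℤ)) _ _ _ _
    (Iso.refl (F.mapHomologicalComplex (ComplexShape.up ℤ) ⋙ Q))

lemma isLE_mapDerivedCategory_obj (M : DerivedCategory B) (n : ℤ) [M.IsLE n] :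
    (F.mapDerivedCategory.obj M).IsLE n := by
  obtain ⟨K, _, ⟨e⟩⟩ := exists_iso_Q_obj_of_isLE M n
  have : CochainComplex.IsStrictlyLE ((F.mapHomologicalComplex (.up ℤ)).obj K) n :=
    HomologicalComplex.map_isStrictlySupported ..
  have e' : Q.obj ((F.mapHomologicalComplex (.up ℤ)).obj K) ≅ F.mapDerivedCategory.obj M :=
    (F.mapDerivedCategory.mapIso e ≪≫ F.mapDerivedCategoryFactors.app K).symm
  exact TStructure.t.isLE_of_iso e' n

lemma isGE_mapDerivedCategory_obj (M : DerivedCategory B) (n : ℤ) [M.IsGE n] :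
    (F.mapDerivedCategory.obj M).IsGE n := by
  obtain ⟨K, _, ⟨e⟩⟩ := exists_iso_Q_obj_of_isGE M n
  have : CochainComplex.IsStrictlyGE ((F.mapHomologicalComplex (.up ℤ)).obj K) n :=
    HomologicalComplex.map_isStrictlySupported ..
  have e' : Q.obj ((F.mapHomologicalComplex (.up ℤ)).obj K) ≅ F.mapDerivedCategory.obj M :=
    (F.mapDerivedCategory.mapIso e ≪≫ F.mapDerivedCategoryFactors.app K).symm
  exact TStructure.t.isGE_of_iso e' n

/-- The functor `D^{≥ n}(B) ⥤ D^{≥ n}(A)` induced by an exact functor `B ⥤ A`. -/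
noncomputable def mapDGE (n : ℤ) : DGE B n ⥤ DGE A n :=
  ObjectProperty.lift _ (ObjectProperty.ι _ ⋙ F.mapDerivedCategory) fun M ↦
    have : M.obj.IsGE n := ⟨M.property⟩
    (isGE_mapDerivedCategory_obj F M.obj n).ge

/-- An exact functor commutes with placing objects in degree `n`. -/
noncomputable def singleDGECompMapDGEIso (n : ℤ) :
    singleDGE B n ⋙ mapDGE F n ≅ F ⋙ singleDGE A n :=
  ((ObjectProperty.fullyFaithfulι _).whiskeringRight B).preimageIso
    (F.mapDerivedCategorySingleFunctor n)

end ExactFunctor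

section BoundedBelow

open DerivedCategory

lemma isBoundedBelowCohomology_eq_plus : IsBoundedBelowCohomology C = TStructure.t.plus := by
  ext M
  exact exists_congr fun n ↦ (isGE_iff M n).symm

instance : ObjectProperty.IsTriangulated (IsBoundedBelowCohomology C) := by
  rw [isBoundedBelowCohomology_eq_plus]
  infer_instance

instance : ObjectProperty.HasInducedTStructure (IsBoundedBelowCohomology C) TStructure.t := by
  simp only [isBoundedBelowCohomology_eq_plus]
  infer_instance

/-- The t-structure on `D⁺(C)` induced by the canonical t-structure on `D(C)`. -/
noncomputable abbrev tStructureDPlus : Triangulated.TStructure (DPlus C) :=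
  ObjectProperty.tStructure (IsBoundedBelowCohomology C) TStructure.t

lemma ge_le_isBoundedBelowCohomology (n : ℤ) :
    TStructure.t.ge n ≤ IsBoundedBelowCohomology C :=
  fun M hM ↦ ⟨n, (isGE_iff M n).1 ⟨hM⟩⟩

/-- The inclusion `D^{≥ n}(C) ⥤ D⁺(C)`. -/
noncomputable abbrev DGEInclDPlus (n : ℤ) : DGE C n ⥤ DPlus C :=
  ObjectProperty.ιOfLE (ge_le_isBoundedBelowCohomology C n)

variable {A B : Type*} [Category A] [Category B] [Abelian A] [Abelian B]
  [HasDerivedCategory A] [HasDerivedCategory B]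
  {F : B ⥤ A} [F.Additive] [PreservesFiniteLimits F] [PreservesFiniteColimits F]
  {Ft : DPlus B ⥤ DPlus A} {R : DPlus A ⥤ DPlus B}

lemma isLE_obj_of_iso_mapDerivedCategory
    (e : Ft ⋙ DPlusIncl A ≅ DPlusIncl B ⋙ F.mapDerivedCategory)
    (M : DPlus B) (n : ℤ) [M.obj.IsLE n] :
    (Ft.obj M).obj.IsLE n :=
  have : ((DPlusIncl B ⋙ F.mapDerivedCategory).obj M).IsLE n :=
    isLE_mapDerivedCategory_obj F M.obj n
  TStructure.t.isLE_of_iso (e.symm.app M) n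

lemma isGE_rightAdjoint_DPlus_obj
    (e : Ft ⋙ DPlusIncl A ≅ DPlusIncl B ⋙ F.mapDerivedCategory) (adj : Ft ⊣ R)
    (N : DPlus A) (n : ℤ) [N.obj.IsGE n] :
    (R.obj N).obj.IsGE n := by
  have : (tStructureDPlus A).IsGE N n := (ObjectProperty.tStructure_isGE_iff ..).2 ‹_›
  refine (ObjectProperty.tStructure_isGE_iff ..).1 (isGE_rightAdjoint_obj (tStructureDPlus B)
    (tStructureDPlus A) adj (n - 1) n (by lia) (fun M hM ↦ ?_) N)
  rw [ObjectProperty.tStructure_isLE_iff] at hM ⊢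
  exact isLE_obj_of_iso_mapDerivedCategory e M (n - 1)

variable (e : Ft ⋙ DPlusIncl A ≅ DPlusIncl B ⋙ F.mapDerivedCategory) (adj : Ft ⊣ R)

/-- The restriction `D^{≥ n}(A) ⥤ D^{≥ n}(B)` of a right adjoint `R` of the functor induced by an
exact functor on bounded-below derived categories. -/
noncomputable def rightAdjointDGE (n : ℤ) : DGE A n ⥤ DGE B n :=
  ObjectProperty.lift _ (DGEInclDPlus A n ⋙ R ⋙ DPlusIncl B) fun N ↦
    have : ((DGEInclDPlus A n).obj N).obj.IsGE n := ⟨N.property⟩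
    (isGE_rightAdjoint_DPlus_obj e adj ((DGEInclDPlus A n).obj N) n).ge

/-- The restriction of the adjunction `adj` to the subcategories `D^{≥ n}`. -/
noncomputable def mapDGEAdjRightAdjointDGE (n : ℤ) : mapDGE F n ⊣ rightAdjointDGE e adj n :=
  adj.restrictFullyFaithful (ObjectProperty.fullyFaithfulιOfLE _)
    (ObjectProperty.fullyFaithfulιOfLE _)
    (((ObjectProperty.fullyFaithfulι _).whiskeringRight _).preimageIso
      (Functor.isoWhiskerLeft (DGEInclDPlus B n) e))
    (Iso.refl _)

/-- The exact functor `F` is left adjoint to the composition of `A ⥤ D⁺(A)`, the right adjoint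
`R`, and `H⁰`. -/
noncomputable def adjSingleDPlusCompHomology :
    F ⊣ singleDPlus A ⋙ R ⋙ DPlusIncl B ⋙ homologyFunctor B 0 :=
  (((singleDGEAdjHomologyDGE B 0).comp (mapDGEAdjRightAdjointDGE e adj 0)).ofNatIsoLeft
    (singleDGECompMapDGEIso F 0)).restrictFullyFaithful (.id B) (fullyFaithfulSingleDGE A 0)
    (Iso.refl _) (Iso.refl _)

end BoundedBelow

/-- Let `A`, `B` be abelian categories and `f⁺ : B ⥤ A` an additive exact functor; let
`f̃⁺ : D⁺(B) ⥤ D⁺(A)` be the functor it induces on bounded-below derived categories (i.e.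
compatible, via the inclusions, with a functor `G' : D(B) ⥤ D(A)` induced by `f⁺` on
complexes).  Suppose given `f₊ : D⁺(A) ⥤ D⁺(B)` together with an adjunction `f̃⁺ ⊣ f₊`.
Then for every object `X` of `A`, regarded as a complex concentrated in degree `0`:
(i) `Hⁱ(f₊ X) = 0` for all `i < 0`; (ii) there is a bijection
`Hom_A (f⁺ Y) X ≃ Hom_B Y (H⁰ (f₊ X))`, natural in `Y`; (iii) if `f⁺` admits a right
adjoint `f⁎ : A ⥤ B`, then `H⁰ (f₊ X)` is naturally isomorphic to `f⁎ X`. -/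
theorem stmt1 {A : Type*} {B : Type*} [Category A] [Category B] [Abelian A] [Abelian B]
    [HasDerivedCategory A] [HasDerivedCategory B]
    (fplus : B ⥤ A) [fplus.Additive]
    [PreservesFiniteLimits fplus] [PreservesFiniteColimits fplus]
    (G' : DerivedCategory B ⥤ DerivedCategory A)
    (eQ : fplus.mapHomologicalComplex (ComplexShape.up ℤ) ⋙ DerivedCategory.Q ≅
      DerivedCategory.Q ⋙ G')
    (Ft : DPlus B ⥤ DPlus A)
    (eF : Ft ⋙ DPlusIncl A ≅ DPlusIncl B ⋙ G')
    (fpush : DPlus A ⥤ DPlus B)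
    (adj : Ft ⊣ fpush) :
    (∀ (X : A) (i : ℤ), i < 0 →
      IsZero ((DerivedCategory.homologyFunctor B i).obj
        ((DPlusIncl B).obj (fpush.obj ((singleDPlus A).obj X))))) ∧
    (∀ X : A, ∃ e : ∀ Y : B, (fplus.obj Y ⟶ X) ≃
        (Y ⟶ (DerivedCategory.homologyFunctor B 0).obj
          ((DPlusIncl B).obj (fpush.obj ((singleDPlus A).obj X)))),
      ∀ (Y Y' : B) (g : Y' ⟶ Y) (φ : fplus.obj Y ⟶ X),
        e Y' (fplus.map g ≫ φ) = g ≫ e Y φ) ∧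
    (∀ fstar : A ⥤ B, (fplus ⊣ fstar) →
      Nonempty ((singleDPlus A ⋙ fpush ⋙ DPlusIncl B ⋙
        DerivedCategory.homologyFunctor B 0) ≅ fstar)) := by
  let e : Ft ⋙ DPlusIncl A ≅ DPlusIncl B ⋙ fplus.mapDerivedCategory :=
    eF ≪≫ Functor.isoWhiskerLeft _ (mapDerivedCategoryIsoOfFactors fplus G' eQ).symm
  let adj₀ := adjSingleDPlusCompHomology e adj
  refine ⟨fun X i hi ↦ ?_, fun X ↦ ⟨fun Y ↦ adj₀.homEquiv Y X, fun _ _ ↦ ?_⟩,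
    fun fstar adj' ↦ ⟨adj₀.rightAdjointUniq adj'⟩⟩
  · have : ((singleDPlus A).obj X).obj.IsGE 0 :=
      inferInstanceAs (((DerivedCategory.singleFunctor A 0).obj X).IsGE 0)
    have : ((DPlusIncl B).obj (fpush.obj ((singleDPlus A).obj X))).IsGE 0 :=
      isGE_rightAdjoint_DPlus_obj e adj ((singleDPlus A).obj X) 0
    exact DerivedCategory.isZero_of_isGE _ 0 i hi
  · exact adj₀.homEquiv_naturality_left
end

section
/- Let K be a field and L a finite separable field extension of K. Let μ : L ⊗[K] L → L be the multiplication map (a ⊗ b ↦ ab) and I := ker μ, an ideal of the commutative ring L ⊗[K] L. Let M be a module over L ⊗[K] L and set M₀ := { m ∈ M : a • m = 0 for all a ∈ I } (the I-torsion submodule of M). Then the composite of the inclusion M₀ ⊆ M with the quotient map M → M/(I • M) is bijective; that is, M₀ → M/IM is a canonical isomorphism of (L ⊗[K] L)-modules. -/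
open TensorProduct

/-!
When `S` is formally unramified and essentially of finite type over `R`, the kernel `I` of
`S ⊗[R] S → S` is finitely generated and satisfies `I = I ^ 2`, so `I` is generated by an
idempotent `e`. On any module `M`, multiplication by `e` is then a projection with range `I • M`
and kernel the `I`-torsion of `M`, so these two submodules are complementary.
-/

section Torsion

variable {R M : Type*} [CommRing R] [AddCommGroup M] [Module R M]

theorem isCompl_span_singleton_smul_top_torsionBy {e : R} (he : IsIdempotentElem e) :
    IsCompl (Ideal.span {e} • (⊤ : Submodule R M)) (Submodule.torsionBy R M e) := by
  have range_eq : (Module.toModuleEnd R M e).range = Ideal.span {e} • (⊤ : Submodule R M) := by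
    rw [Submodule.ideal_span_singleton_smul, LinearMap.range_eq_map]
    rfl
  rw [← range_eq]
  exact LinearMap.IsIdempotentElem.isCompl (he.map (Module.toModuleEnd R M))

theorem isCompl_ideal_smul_top_torsionBySet {I : Ideal R} (hfg : I.FG) (hI : IsIdempotentElem I) :
    IsCompl (I • (⊤ : Submodule R M)) (Submodule.torsionBySet R M I) := by
  obtain ⟨e, he, rfl⟩ := (I.isIdempotentElem_iff_of_fg hfg).mp hI
  rw [Submodule.torsionBySet_span_singleton_eq]
  exact isCompl_span_singleton_smul_top_torsionBy he

theorem bijective_mkQ_ideal_smul_top_of_isIdempotentElem {I : Ideal R} (hfg : I.FG)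
    (hI : IsIdempotentElem I) :
    Function.Bijective
      (fun m : {m : M // ∀ a ∈ I, a • m = 0} => (I • (⊤ : Submodule R M)).mkQ m.1) := by
  have mem_iff (m : M) : (∀ a ∈ I, a • m = 0) ↔ m ∈ Submodule.torsionBySet R M I := by
    simp only [Submodule.mem_torsionBySet_iff, Subtype.forall, SetLike.mem_coe]
  exact (Submodule.quotientEquivOfIsCompl _ _
    (isCompl_ideal_smul_top_torsionBySet hfg hI)).symm.bijective.comp
      (Equiv.subtypeEquivRight mem_iff).bijective

end Torsion

theorem isIdempotentElem_ker_lmul' (R S : Type*) [CommRing R] [CommRing S] [Algebra R S]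
    [Algebra.FormallyUnramified R S] :
    IsIdempotentElem (RingHom.ker (Algebra.TensorProduct.lmul' R (S := S))) :=
  (Ideal.cotangent_subsingleton_iff _).mp
    (Algebra.FormallyUnramified.subsingleton_kaehlerDifferential (R := R) (A := S))

theorem stmt2_general (R S : Type*) [CommRing R] [CommRing S] [Algebra R S]
    [Algebra.EssFiniteType R S] [Algebra.FormallyUnramified R S]
    (M : Type*) [AddCommGroup M] [Module (S ⊗[R] S) M] :
    Function.Bijective
      (fun m : {m : M // ∀ a ∈ RingHom.ker (Algebra.TensorProduct.lmul' R (S := S)), a • m = 0} =>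
        ((RingHom.ker (Algebra.TensorProduct.lmul' R (S := S)) •
          (⊤ : Submodule (S ⊗[R] S) M))).mkQ m.1) :=
  bijective_mkQ_ideal_smul_top_of_isIdempotentElem (KaehlerDifferential.ideal_fg R S)
    (isIdempotentElem_ker_lmul' R S)

/-- Let `K` be a field and `L` a finite separable field extension of `K`.  Let
`μ : L ⊗[K] L → L` be the multiplication map and `I := ker μ`.  For a module `M` over
`L ⊗[K] L`, the composite of the inclusion of the `I`-torsion submodule
`M₀ = {m : M | ∀ a ∈ I, a • m = 0}` into `M` with the quotient map `M → M ⧸ I • M` is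
bijective. -/
theorem stmt2 (K L : Type*) [Field K] [Field L] [Algebra K L]
    [FiniteDimensional K L] [Algebra.IsSeparable K L]
    (M : Type*) [AddCommGroup M] [Module (L ⊗[K] L) M] :
    Function.Bijective
      (fun m : {m : M // ∀ a ∈ RingHom.ker (Algebra.TensorProduct.lmul' K (S := L)), a • m = 0} =>
        ((RingHom.ker (Algebra.TensorProduct.lmul' K (S := L)) •
          (⊤ : Submodule (L ⊗[K] L) M))).mkQ m.1) := by
  have := Algebra.FormallyUnramified.of_isSeparable K L
  exact stmt2_general K L M
end

section
/- Let K be a field and L a finite separable field extension of K. Let μ : L ⊗[K] L → L be the multiplication map (a ⊗ b ↦ ab) and I := ker μ. Regard L as an (L ⊗[K] L)-algebra via μ. Let M be a module over L ⊗[K] L and set M₀ := { m ∈ M : a • m = 0 for all a ∈ I }. Then the map M₀ → L ⊗[L ⊗[K] L] M sending m to 1 ⊗ m (the restriction to M₀ of the canonical base-change map M → L ⊗[L ⊗[K] L] M) is bijective; that is, M₀ is canonically isomorphic to the base change L ⊗[L ⊗[K] L] M. -/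
open TensorProduct

/-!
A finite separable extension is formally unramified and of finite type. For any such `R`-algebra
`S`, the kernel `I` of multiplication `S ⊗[R] S → S` is finitely generated, and it is idempotent
because `I / I² = Ω[S⁄R] = 0`; hence it is generated by an idempotent `e`. Multiplication by `e` on
`M` is then a projection with kernel the `I`-torsion `M₀` and range `I • M`, so `M = M₀ ⊕ I • M` and
`M₀` maps isomorphically onto `M / I • M = S ⊗[S ⊗[R] S] M`.
-/

section BaseChange

variable {R M : Type*} [CommRing R] [AddCommGroup M] [Module R M]

theorem isCompl_torsionBySet_smul_top_of_isIdempotentElem {e : R} (he : IsIdempotentElem e) :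
    IsCompl (Submodule.torsionBySet R M (Ideal.span {e}))
      (Ideal.span {e} • (⊤ : Submodule R M)) := by
  have proj_idem : IsIdempotentElem (DistribSMul.toLinearMap R M e) :=
    LinearMap.ext fun m => by simp [smul_smul, he.eq]
  rw [Submodule.torsionBySet_ideal_span_singleton_eq, Submodule.ideal_span_singleton_smul,
    Submodule.pointwise_smul_def, Submodule.map_top]
  exact (LinearMap.IsIdempotentElem.isCompl proj_idem).symm

variable {A : Type*} [Ring A] [Algebra R A]

theorem ker_tensorProductMk_one_of_surjective (hA : Function.Surjective (algebraMap R A)) :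
    LinearMap.ker (TensorProduct.mk R A M 1) =
      RingHom.ker (algebraMap R A) • (⊤ : Submodule R M) := by
  let quotEquiv : (R ⧸ RingHom.ker (Algebra.ofId R A)) ≃ₐ[R] A :=
    Ideal.quotientKerAlgEquivOfSurjective hA
  have mk_eq : TensorProduct.mk R A M 1 = (quotEquiv.toLinearEquiv.rTensor M).toLinearMap ∘ₗ
      TensorProduct.mk R (R ⧸ RingHom.ker (Algebra.ofId R A)) M 1 :=
    LinearMap.ext fun m => by simp
  rw [mk_eq, LinearEquiv.ker_comp, LinearMap.ker_tensorProductMk]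
  rfl

theorem bijective_tensorProductMk_one_domRestrict_torsionBySet
    (hA : Function.Surjective (algebraMap R A)) {e : R} (he : IsIdempotentElem e)
    (hker : RingHom.ker (algebraMap R A) = Ideal.span {e}) :
    Function.Bijective ((TensorProduct.mk R A M 1).domRestrict
      (Submodule.torsionBySet R M (RingHom.ker (algebraMap R A)))) := by
  have hcompl : IsCompl (Submodule.torsionBySet R M (RingHom.ker (algebraMap R A)))
      (LinearMap.ker (TensorProduct.mk R A M 1)) := by
    rw [ker_tensorProductMk_one_of_surjective hA, hker]
    exact isCompl_torsionBySet_smul_top_of_isIdempotentElem he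
  exact ⟨LinearMap.injective_domRestrict_iff.mpr hcompl.disjoint,
    (LinearMap.surjective_domRestrict_iff (TensorProduct.mk_surjective R M A hA)).mpr
      hcompl.codisjoint⟩

end BaseChange

section Unramified

variable (R S : Type*) [CommRing R] [CommRing S] [Algebra R S]

theorem exists_isIdempotentElem_ker_lmul'_eq_span [Algebra.EssFiniteType R S]
    [Algebra.FormallyUnramified R S] :
    ∃ e : S ⊗[R] S, IsIdempotentElem e ∧
      RingHom.ker (Algebra.TensorProduct.lmul' R (S := S)) = Ideal.span {e} :=
  (Ideal.isIdempotentElem_iff_of_fg _ (KaehlerDifferential.ideal_fg R S)).mp <|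
    (Ideal.cotangent_subsingleton_iff _).mp <| inferInstanceAs <| Subsingleton Ω[S⁄R]

theorem stmt3_general [Algebra.EssFiniteType R S] [Algebra.FormallyUnramified R S]
    (M : Type*) [AddCommGroup M] [Module (S ⊗[R] S) M] :
    letI : Algebra (S ⊗[R] S) S := (Algebra.TensorProduct.lmul' R (S := S)).toRingHom.toAlgebra
    Function.Bijective
      (fun m : {m : M // ∀ a ∈ RingHom.ker (Algebra.TensorProduct.lmul' R (S := S)), a • m = 0} =>
        ((1 : S) ⊗ₜ[S ⊗[R] S] (m.1 : M) : S ⊗[S ⊗[R] S] M)) := by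
  let : Algebra (S ⊗[R] S) S := (Algebra.TensorProduct.lmul' R (S := S)).toRingHom.toAlgebra
  have lmul'_surjective : Function.Surjective (algebraMap (S ⊗[R] S) S) := fun s =>
    ⟨s ⊗ₜ 1, (Algebra.TensorProduct.lmul'_apply_tmul s 1).trans (mul_one s)⟩
  obtain ⟨e, he, hker⟩ := exists_isIdempotentElem_ker_lmul'_eq_span R S
  let torsionEquiv :
      {m : M // ∀ a ∈ RingHom.ker (Algebra.TensorProduct.lmul' R (S := S)), a • m = 0} ≃
        Submodule.torsionBySet (S ⊗[R] S) M (RingHom.ker (algebraMap (S ⊗[R] S) S)) :=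
    Equiv.subtypeEquivRight fun m =>
      Subtype.forall.symm.trans (Submodule.mem_torsionBySet_iff _ m).symm
  exact (bijective_tensorProductMk_one_domRestrict_torsionBySet lmul'_surjective he hker).comp
    torsionEquiv.bijective

end Unramified

/-- Let `K` be a field and `L` a finite separable field extension of `K`.  Let
`μ : L ⊗[K] L → L` be the multiplication map and `I := ker μ`; regard `L` as an
`(L ⊗[K] L)`-algebra via `μ`.  For a module `M` over `L ⊗[K] L`, the restriction to the
`I`-torsion submodule `M₀ = {m : M | ∀ a ∈ I, a • m = 0}` of the canonical base-change map
`M → L ⊗[L ⊗[K] L] M`, `m ↦ 1 ⊗ m`, is bijective. -/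
theorem stmt3 (K L : Type*) [Field K] [Field L] [Algebra K L]
    [FiniteDimensional K L] [Algebra.IsSeparable K L]
    (M : Type*) [AddCommGroup M] [Module (L ⊗[K] L) M] :
    letI : Algebra (L ⊗[K] L) L := (Algebra.TensorProduct.lmul' K (S := L)).toRingHom.toAlgebra
    Function.Bijective
      (fun m : {m : M // ∀ a ∈ RingHom.ker (Algebra.TensorProduct.lmul' K (S := L)), a • m = 0} =>
        ((1 : L) ⊗ₜ[L ⊗[K] L] (m.1 : M) : L ⊗[L ⊗[K] L] M)) := by
  have := Algebra.FormallyUnramified.of_isSeparable K L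
  exact stmt3_general K L M
end

section
/- Let K be a field and L a finite separable field extension of K. Then every module over the commutative ring L ⊗[K] L is flat. -/
open TensorProduct

/-!
For an unramified `R`-algebra `S`, an `S`-module that is flat over `R` is flat over `S`. By the
equational criterion, flatness only involves finitely many scalars at a time, so this persists for
filtered unions of unramified algebras. A separable algebraic extension `L` of `K` is the filtered
union of its finite subextensions, which are unramified, and this is preserved by base change to a
field extension `F` of `K`. As every module is flat over `F`, every module over `F ⊗[K] L` is flat.
-/

theorem flat_of_forall_finite_subset_subring {S M : Type*} [CommRing S] [AddCommGroup M]
    [Module S M] (h : ∀ s : Set S, s.Finite → ∃ R : Subring S, s ⊆ R ∧ Module.Flat R M) :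
    Module.Flat S M := by
  refine Module.Flat.of_forall_isTrivialRelation fun {l f x} hfx ↦ ?_
  obtain ⟨R, hfR, _⟩ := h (Set.range f) (Set.finite_range f)
  lift f to Fin l → R using fun i ↦ hfR ⟨i, rfl⟩
  obtain ⟨k, a, y, hx, hfa⟩ :=
    Module.Flat.isTrivialRelation_of_sum_smul_eq_zero (R := R) (f := f) hfx
  exact ⟨k, fun i j ↦ a i j, y, hx, fun j ↦ by simpa using congrArg R.subtype (hfa j)⟩

theorem exists_finite_forall_subset_baseChange {R A B : Type*} [CommSemiring R] [CommSemiring A]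
    [Semiring B] [Algebra R A] [Algebra R B] {s : Set (A ⊗[R] B)} (hs : s.Finite) :
    ∃ t : Set B, t.Finite ∧ ∀ C : Subalgebra R B, t ⊆ C → s ⊆ C.baseChange A := by
  obtain ⟨N, hN, hsN⟩ := TensorProduct.exists_finite_submodule_right_of_setFinite s hs
  obtain ⟨t, ht⟩ := Module.Finite.iff_fg.mp hN
  refine ⟨t, t.finite_toSet, fun C htC x hx ↦ ?_⟩
  have hNC : N ≤ C.toSubmodule := ht ▸ Submodule.span_le.mpr htC
  obtain ⟨z, rfl⟩ := hsN hx
  clear hx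
  induction z with
  | zero => simp
  | tmul a n => exact Subalgebra.tmul_mem_baseChange (hNC n.2) a
  | add z w hz hw => exact map_add (N.subtype.lTensor A) z w ▸ add_mem hz hw

theorem unramified_subalgebra_baseChange {R B : Type*} (A : Type*) [CommRing R] [CommRing A]
    [CommRing B] [Algebra R A] [Algebra R B] (C : Subalgebra R B) [Algebra.Unramified R C] :
    Algebra.Unramified A (C.baseChange A) := by
  let φ : A ⊗[R] C →ₐ[A] A ⊗[R] B := Algebra.TensorProduct.map (AlgHom.id A A) C.val
  have hφ : Function.Surjective φ.rangeRestrict := φ.rangeRestrict_surjective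
  exact ⟨.of_surjective φ.rangeRestrict hφ, .of_surjective φ.rangeRestrict hφ⟩

/-- `S` is an ind-unramified `R`-algebra, that is, a filtered colimit of unramified `R`-algebras.
As quotients of unramified algebras are unramified, it is enough to consider filtered unions of
subalgebras, and this is encoded by covering every finite subset of `S`. -/
def IsIndUnramified (R S : Type*) [CommRing R] [CommRing S] [Algebra R S] : Prop :=
  ∀ s : Set S, s.Finite → ∃ A : Subalgebra R S, s ⊆ A ∧ Algebra.Unramified R A

namespace IsIndUnramified

theorem of_isSeparable (K L : Type*) [Field K] [Field L] [Algebra K L]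
    [Algebra.IsSeparable K L] : IsIndUnramified K L := by
  intro s hs
  let E := IntermediateField.adjoin K s
  have : Finite s := hs
  have : FiniteDimensional K E :=
    IntermediateField.finiteDimensional_adjoin fun x _ ↦ Algebra.IsIntegral.isIntegral x
  have : Algebra.FormallyUnramified K E := .of_isSeparable K E
  have hE : Algebra.Unramified K E := {}
  exact ⟨E.toSubalgebra, IntermediateField.subset_adjoin K s, hE⟩

variable {R S : Type*} [CommRing R] [CommRing S] [Algebra R S]

theorem baseChange (A : Type*) [CommRing A] [Algebra R A] (hS : IsIndUnramified R S) :
    IsIndUnramified A (A ⊗[R] S) := by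
  intro s hs
  obtain ⟨t, ht, hts⟩ := exists_finite_forall_subset_baseChange hs
  obtain ⟨C, htC, _⟩ := hS t ht
  exact ⟨C.baseChange A, hts C htC, unramified_subalgebra_baseChange A C⟩

theorem flat_of_restrictScalars (hS : IsIndUnramified R S) (M : Type*) [AddCommGroup M]
    [Module R M] [Module S M] [IsScalarTower R S M] [Module.Flat R M] : Module.Flat S M := by
  refine flat_of_forall_finite_subset_subring fun s hs ↦ ?_
  obtain ⟨A, hsA, _⟩ := hS s hs
  exact ⟨A.toSubring, hsA, Algebra.FormallyUnramified.flat_of_restrictScalars R A M⟩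

theorem flat_of_field {F : Type*} [Field F] [Algebra F S] (hS : IsIndUnramified F S)
    (M : Type*) [AddCommGroup M] [Module S M] : Module.Flat S M :=
  let _ : Module F M := Module.compHom M (algebraMap F S)
  have : IsScalarTower F S M := .of_compHom F S M
  hS.flat_of_restrictScalars M

end IsIndUnramified

theorem stmt4_general (K F L : Type*) [Field K] [Field F] [Algebra K F] [Field L] [Algebra K L]
    [Algebra.IsSeparable K L] (M : Type*) [AddCommGroup M] [Module (F ⊗[K] L) M] :
    Module.Flat (F ⊗[K] L) M :=
  ((IsIndUnramified.of_isSeparable K L).baseChange F).flat_of_field M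

/-- Let `K` be a field and `L` a finite separable field extension of `K`.  Then every module
over the commutative ring `L ⊗[K] L` is flat. -/
theorem stmt4 (K L : Type*) [Field K] [Field L] [Algebra K L]
    [FiniteDimensional K L] [Algebra.IsSeparable K L]
    (M : Type*) [AddCommGroup M] [Module (L ⊗[K] L) M] :
    Module.Flat (L ⊗[K] L) M := by
  exact stmt4_general K L L M
end

section
/- Let K be a field, L a finite separable field extension of K, and Ω an algebraically closed field equipped with a K-algebra structure (for instance an algebraic closure of K). Let V be a finite-dimensional L-vector space and φ : V → V an L-linear endomorphism; write f ∈ L[X] for the characteristic polynomial of φ as an L-linear endomorphism, and g ∈ K[X] for the characteristic polynomial of φ regarded, by restriction of scalars, as a K-linear endomorphism of V (which is finite-dimensional over K). Then the image of g in Ω[X] under the structure map K → Ω equals the product, over all K-algebra homomorphisms σ : L → Ω, of the polynomials obtained by applying σ to the coefficients of f. Consequently, the set of roots of g in Ω (the eigenvalues of the K-linear endomorphism) equals the union, over all K-algebra homomorphisms σ : L → Ω, of the sets of roots in Ω of the polynomial f with coefficients mapped by σ. -/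
open Polynomial

/-!
In a basis `b` of `L` over `K`, restriction of scalars replaces each entry `a` of the matrix of `φ`
by the block of multiplication by `a`. After base change to `Ω`, the matrix `(σ (b j))` indexed by
the embeddings `σ : L → Ω` and by `b` conjugates all of these blocks at once to the diagonal
matrices `diag (σ a)`: it is the isomorphism `Ω ⊗[K] L ≃ Ω^Hom(L, Ω)` in coordinates, and it is
nonsingular by Dedekind's linear independence of characters. Regrouping the rows and columns by `σ`
instead of by basis vectors of `V` makes the matrix block diagonal, with the matrix of `φ`
transported along `σ` as the block at `σ`.
-/

section Matrix

open Matrix nonZeroDivisors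

theorem comp_map_diagonal {l m n R S : Type*} [DecidableEq n] [Zero R] (M : Matrix l m S)
    (f : n → S → R) :
    (M.map fun a ↦ diagonal fun i ↦ f i a).comp l m n n R =
      blockDiagonal fun i ↦ M.map (f i) := by
  ext ⟨i, k⟩ ⟨j, l⟩
  simp [blockDiagonal_apply, diagonal_apply]

variable {m n R S : Type*} [Fintype m] [DecidableEq m] [Fintype n] [DecidableEq n] [CommRing R]

theorem charpoly_eq_of_mul_eq_mul {P A B : Matrix n n R} (hP : P.det ∈ R⁰)
    (h : P * A = B * P) : A.charpoly = B.charpoly := by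
  let P' : Matrix n n R[X] := C.mapMatrix P
  have hP' : P'.det ∈ R[X]⁰ := by
    rw [← RingHom.map_det]
    exact mem_nonZeroDivisors_of_leadingCoeff (by rwa [leadingCoeff_C])
  have hcharmatrix : P' * A.charmatrix = B.charmatrix * P' := by
    rw [charmatrix, charmatrix, mul_sub, sub_mul, ← map_mul, ← map_mul, h,
      (scalar_commute X (Commute.all X) P').eq]
  have hdet : P'.det * A.charpoly = P'.det * B.charpoly := by
    rw [Matrix.charpoly, Matrix.charpoly, ← det_mul, hcharmatrix, det_mul, mul_comm]
  exact (mul_cancel_left_mem_nonZeroDivisors hP').mp hdet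

theorem charpoly_blockDiagonal (A : n → Matrix m m R) :
    (blockDiagonal A).charpoly = ∏ i, (A i).charpoly := by
  have hcharmatrix : (blockDiagonal A).charmatrix = blockDiagonal fun i ↦ (A i).charmatrix := by
    ext ⟨i, k⟩ ⟨j, l⟩ : 2
    by_cases hij : i = j <;> by_cases hkl : k = l <;>
      simp [blockDiagonal_apply, hij, hkl]
  rw [Matrix.charpoly, hcharmatrix, det_blockDiagonal]
  rfl

theorem det_comp_diagonal (P : m → Matrix n n R) :
    ((diagonal P).comp m m n n R).det = ∏ i, (P i).det := by
  rw [comp_diagonal, det_reindex_self, det_blockDiagonal]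

theorem charpoly_comp_map_eq_of_mul_eq_mul {P : Matrix n n R} (hP : P.det ∈ R⁰)
    {f g : S → Matrix n n R} (h : ∀ a, P * f a = g a * P) (M : Matrix m m S) :
    ((M.map f).comp m m n n R).charpoly = ((M.map g).comp m m n n R).charpoly := by
  let Q : Matrix m m (Matrix n n R) := diagonal fun _ ↦ P
  have hQ : (Q.comp m m n n R).det ∈ R⁰ := by
    rw [det_comp_diagonal]
    exact prod_mem fun _ _ ↦ hP
  have hblocks : Q * M.map f = M.map g * Q := by
    ext1 i j
    simp only [Q, diagonal_mul, mul_diagonal, map_apply, h]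
  refine charpoly_eq_of_mul_eq_mul hQ ?_
  simpa only [map_mul, compRingEquiv_apply] using congrArg (compRingEquiv m n R) hblocks

end Matrix

section Embeddings

open Matrix Module nonZeroDivisors

variable {n R S T : Type*} [Fintype n] [DecidableEq n] [CommRing R] [CommRing S] [Algebra R S]
  [CommRing T] [Algebra R T] (b : Basis n R S) (σ : n → S →ₐ[R] T)

theorem of_algHom_basis_mul_map_leftMulMatrix (a : S) :
    (of fun i j ↦ σ i (b j)) * (Algebra.leftMulMatrix b a).map (algebraMap R T) =
      (diagonal fun i ↦ σ i a) * of fun i j ↦ σ i (b j) := by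
  ext i j
  calc ∑ k, σ i (b k) * algebraMap R T (Algebra.leftMulMatrix b a k j)
      = σ i (∑ k, b.repr (a * b j) k • b k) := by
        simp [Algebra.leftMulMatrix_eq_repr_mul, Algebra.smul_def, mul_comm]
    _ = σ i a * σ i (b j) := by rw [b.sum_repr, map_mul]
    _ = _ := by rw [diagonal_mul, of_apply]

theorem det_of_algHom_basis_ne_zero [IsDomain T] (hσ : Function.Injective σ) :
    (of fun i j ↦ σ i (b j)).det ≠ 0 := by
  rw [Ne, ← exists_vecMul_eq_zero_iff]
  rintro ⟨c, hc, hcσ⟩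
  have hindep : LinearIndependent T fun i ↦ (σ i).toLinearMap :=
    (linearIndependent_algHom_toLinearMap R S T).comp σ hσ
  have hsum : ∑ i, c i • (σ i).toLinearMap = 0 :=
    b.ext fun j ↦ by simpa [vecMul, dotProduct] using congrFun hcσ j
  exact hc (funext (Fintype.linearIndependent_iff.mp hindep c hsum))

variable {V : Type*} [AddCommGroup V] [Module R V] [Module S V] [IsScalarTower R S V]
  [Module.Free R V] [Module.Finite R V] [Module.Free S V] [Module.Finite S V]

theorem charpoly_restrictScalars_map_eq_prod (hσ : (of fun i j ↦ σ i (b j)).det ∈ T⁰)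
    (φ : V →ₗ[S] V) :
    (φ.restrictScalars R).charpoly.map (algebraMap R T) =
      ∏ i, φ.charpoly.map (σ i : S →+* T) := by
  classical
  let c := Module.Free.chooseBasis S V
  let M := φ.toMatrix c c
  calc (φ.restrictScalars R).charpoly.map (algebraMap R T)
      = (((M.map (Algebra.leftMulMatrix b)).comp _ _ _ _ R).map (algebraMap R T)).charpoly := by
        rw [← LinearMap.charpoly_toMatrix _ (b.smulTower' c), LinearMap.restrictScalars_toMatrix,
          charpoly_map]
    _ = ((M.map fun a ↦ diagonal fun i ↦ σ i a).comp _ _ _ _ T).charpoly :=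
        charpoly_comp_map_eq_of_mul_eq_mul hσ (of_algHom_basis_mul_map_leftMulMatrix b σ) M
    _ = ∏ i, (M.map (σ i : S →+* T)).charpoly := by
        rw [comp_map_diagonal, charpoly_blockDiagonal]
        rfl
    _ = ∏ i, φ.charpoly.map (σ i : S →+* T) := by
        simp only [charpoly_map, M, LinearMap.charpoly_toMatrix]

end Embeddings

theorem stmt5_general (R S T : Type*) [CommRing R] [CommRing S] [Algebra R S] [Module.Free R S]
    [Module.Finite R S] [CommRing T] [IsDomain T] [Algebra R T] [Fintype (S →ₐ[R] T)]
    (hcard : Fintype.card (S →ₐ[R] T) = Module.finrank R S)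
    (V : Type*) [AddCommGroup V] [Module R V] [Module S V] [IsScalarTower R S V]
    [Module.Free S V] [Module.Finite S V] (φ : V →ₗ[S] V) :
    haveI : Module.Free R V := Module.Free.trans (S := S)
    haveI : Module.Finite R V := Module.Finite.trans S V
    ((φ.restrictScalars R).charpoly.map (algebraMap R T) =
      ∏ σ : S →ₐ[R] T, φ.charpoly.map (σ : S →+* T)) ∧
    {x : T | ((φ.restrictScalars R).charpoly.map (algebraMap R T)).IsRoot x} =
      ⋃ σ : S →ₐ[R] T, {x : T | (φ.charpoly.map (σ : S →+* T)).IsRoot x} := by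
  have : Module.Free R V := Module.Free.trans (S := S)
  have : Module.Finite R V := Module.Finite.trans S V
  classical
  have : Nontrivial R := (algebraMap R T).domain_nontrivial
  let b : Module.Basis (S →ₐ[R] T) R S :=
    (Module.finBasis R S).reindex (Fintype.equivFinOfCardEq hcard).symm
  have hdet := det_of_algHom_basis_ne_zero b id Function.injective_id
  have hprod : (φ.restrictScalars R).charpoly.map (algebraMap R T) =
      ∏ σ : S →ₐ[R] T, φ.charpoly.map (σ : S →+* T) :=
    charpoly_restrictScalars_map_eq_prod b id (mem_nonZeroDivisors_of_ne_zero hdet) φ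
  refine ⟨hprod, ?_⟩
  ext x
  simp only [hprod, isRoot_prod, Set.mem_ofPred_eq, Set.mem_iUnion, Finset.mem_univ, true_and]

/-- Let `K` be a field, `L` a finite separable field extension of `K`, and `Ω` an
algebraically closed field with a `K`-algebra structure.  Let `V` be a finite-dimensional
`L`-vector space and `φ : V → V` an `L`-linear endomorphism, with characteristic polynomial
`f ∈ L[X]`; let `g ∈ K[X]` be the characteristic polynomial of `φ` regarded as a `K`-linear
endomorphism of `V`.  Then the image of `g` in `Ω[X]` equals the product, over all
`K`-algebra homomorphisms `σ : L → Ω`, of the polynomials `σ(f)`, and consequently the set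
of roots of `g` in `Ω` is the union over all `σ` of the sets of roots of `σ(f)`. -/
theorem stmt5 (K L Ω : Type*) [Field K] [Field L] [Algebra K L]
    [FiniteDimensional K L] [Algebra.IsSeparable K L]
    [Field Ω] [IsAlgClosed Ω] [Algebra K Ω]
    (V : Type*) [AddCommGroup V] [Module K V] [Module L V] [IsScalarTower K L V]
    [FiniteDimensional L V] (φ : V →ₗ[L] V) :
    haveI : Module.Finite K V := Module.Finite.trans L V
    ((LinearMap.restrictScalars K φ).charpoly.map (algebraMap K Ω) =
      ∏ σ : L →ₐ[K] Ω, φ.charpoly.map (σ : L →+* Ω)) ∧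
    {x : Ω | ((LinearMap.restrictScalars K φ).charpoly.map (algebraMap K Ω)).IsRoot x} =
      ⋃ σ : L →ₐ[K] Ω, {x : Ω | (φ.charpoly.map (σ : L →+* Ω)).IsRoot x} := by
  exact stmt5_general K L Ω (AlgHom.card K L Ω) V φ
end

section
/- Let A be a Grothendieck abelian category and F : A ⥤ A an additive equivalence of categories, and let F-A and for_F : F-A → A be as follows: F-A is the category of pairs (X, Φ) with X an object of A and Φ : X ≅ F(X) an isomorphism, morphisms being morphisms in A compatible with the Φ's, and for_F the forgetful functor. Define (−)_F : A → F-A by sending X to the pair consisting of the coproduct ⊕_{n ∈ ℤ} Fⁿ(X) together with the canonical shift isomorphism ⊕_{n ∈ ℤ} Fⁿ(X) ≅ F(⊕_{n ∈ ℤ} Fⁿ(X)) obtained from the identifications F(Fⁿ(X)) ≅ F^{n+1}(X) (using that the equivalence F preserves coproducts). Then: (i) ((−)_F, for_F) is an adjoint pair; (ii) (−)_F is exact, and consequently for_F sends injective objects of F-A to injective objects of A; (iii) small filtered colimits exist in F-A and commute with for_F; (iv) if G is a generator (separator) of A then G_F is a generator of F-A; (v) F-A is a Grothendieck abelian category. 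-/
open CategoryTheory CategoryTheory.Limits

universe v u

/-- Given an endofunctor `F : A ⥤ A`, the objects of the category `F-A`: pairs `(X, Φ)`
where `X` is an object of `A` and `Φ : X ≅ F(X)` is an isomorphism. -/
structure FCat {A : Type u} [Category.{v} A] (F : A ⥤ A) where
  /-- the underlying object of `A` -/
  pt : A
  /-- the structural isomorphism `Φ : X ≅ F(X)` -/
  iso : pt ≅ F.obj pt

namespace FCat

variable {A : Type u} [Category.{v} A] (F : A ⥤ A)

/-- `F-A` is a category: a morphism `(X, Φ) → (Y, Ψ)` is a morphism `f : X → Y` of `A`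
satisfying `F(f) ∘ Φ = Ψ ∘ f`. -/
instance : Category (FCat F) where
  Hom X Y := {f : X.pt ⟶ Y.pt // X.iso.hom ≫ F.map f = f ≫ Y.iso.hom}
  id X := ⟨𝟙 X.pt, by simp⟩
  comp {X Y Z} f g := ⟨f.1 ≫ g.1, by
    rw [F.map_comp, ← Category.assoc, f.2, Category.assoc, g.2, ← Category.assoc]⟩
  id_comp f := Subtype.ext (Category.id_comp f.1)
  comp_id f := Subtype.ext (Category.comp_id f.1)
  assoc f g h := Subtype.ext (Category.assoc f.1 g.1 h.1)

/-- The forgetful functor `for_F : F-A ⥤ A`, `(X, Φ) ↦ X`. -/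
def forgetF : FCat F ⥤ A where
  obj X := X.pt
  map f := f.1

end FCat

/-- The `n`-th iterate (`n : ℕ`) of an endofunctor. -/
def npow {A : Type u} [Category.{v} A] (F : A ⥤ A) : ℕ → (A ⥤ A)
  | 0 => 𝟭 A
  | n + 1 => npow F n ⋙ F

/-- The `n`-th iterate (`n : ℤ`) of a self-equivalence: for `n ≥ 0` the `n`-th iterate of
`F`, and for `n < 0` the `(-n)`-th iterate of a (chosen) quasi-inverse of `F`. -/
noncomputable def zpow {A : Type u} [Category.{v} A] (F : A ⥤ A) [F.IsEquivalence] :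
    ℤ → (A ⥤ A)
  | Int.ofNat n => npow F n
  | Int.negSucc n => npow F.inv (n + 1)

/-!
Since `for_F` is conservative and creates the limits and colimits that `F` preserves, `F-A` inherits
the abelian structure and the exactness of filtered colimits from `A`. A morphism
`X_F ⟶ (Y, Ψ)` is a family of morphisms `gₙ : Fⁿ(X) ⟶ Y` such that `F(gₙ)` and `gₙ₊₁` agree up to
`Ψ`. As `F` and `Ψ` are invertible, `g₀` determines the family, and `g₀` extends by iterating
`Ψ⁻¹ ∘ F(-)` in both directions: this is the adjunction. Its left adjoint preserves separators
because `for_F` is faithful, and is left exact because coproducts in an AB5 category are exact,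
which in turn makes `for_F` preserve injectives.
-/

section General

variable {C D : Type*} [Category* C] [Category* D]

/-- An additive category with a conservative exact functor to an abelian category is abelian. -/
@[reducible]
noncomputable def abelianOfConservativeExact [Preadditive C] [HasFiniteLimits C]
    [HasFiniteColimits C] [Abelian D] (U : C ⥤ D) [U.PreservesZeroMorphisms]
    [PreservesFiniteLimits U] [PreservesFiniteColimits U] [U.ReflectsIsomorphisms] : Abelian C :=
  have (X Y : C) (f : X ⟶ Y) : IsIso (Abelian.coimageImageComparison f) := by
    rw [← isIso_iff_of_reflects_iso _ U,
      Arrow.isIso_iff_isIso_of_isIso (Abelian.PreservesCoimageImageComparison.iso U f).hom]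
    infer_instance
  Abelian.ofCoimageImageComparisonIsIso

lemma isSeparator_obj_of_adjunction {L : C ⥤ D} {R : D ⥤ C} (adj : L ⊣ R) [R.Faithful] {G : C}
    (hG : IsSeparator G) : IsSeparator (L.obj G) := by
  refine (isSeparator_def _).2 fun X Y f g hfg => R.map_injective (hG.def _ _ fun h => ?_)
  simpa [adj.homEquiv_naturality_right] using
    congrArg (adj.homEquiv G Y) (hfg ((adj.homEquiv G X).symm h))

lemma preservesFiniteLimits_colimit {J : Type*} [Category* J] [HasColimitsOfShape J D]
    [HasExactColimitsOfShape J D] (K : J ⥤ C ⥤ D)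
    [∀ j, PreservesFiniteLimits (K.obj j)] : PreservesFiniteLimits (colimit K) := by
  have : PreservesFiniteLimits K.flip :=
    preservesFiniteLimits_of_evaluation _ fun j =>
      inferInstanceAs (PreservesFiniteLimits (K.obj j))
  exact preservesFiniteLimits_of_natIso (colimitFlipIsoCompColim K.flip).symm

end General

section Powers

variable {A : Type*} [Category* A]

instance npow_isEquivalence (F : A ⥤ A) [F.IsEquivalence] : ∀ n, (npow F n).IsEquivalence
  | 0 => inferInstanceAs (𝟭 A).IsEquivalence
  | n + 1 =>
    have := npow_isEquivalence F n
    inferInstanceAs (npow F n ⋙ F).IsEquivalence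

variable (F : A ⥤ A) [F.IsEquivalence]

instance zpow_isEquivalence : ∀ n, (zpow F n).IsEquivalence
  | Int.ofNat n => npow_isEquivalence F n
  | Int.negSucc n => npow_isEquivalence F.inv (n + 1)

/-- The identification `F(Fⁿ(X)) ≅ Fⁿ⁺¹(X)` for `n : ℤ`, natural in `X`. -/
noncomputable def zpowSuccIso : ∀ n : ℤ, zpow F n ⋙ F ≅ zpow F (n + 1)
  | Int.ofNat n => Iso.refl (npow F (n + 1))
  | Int.negSucc 0 => Functor.isoWhiskerLeft (𝟭 A) F.asEquivalence.counitIso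
  | Int.negSucc (n + 1) => Functor.isoWhiskerLeft (npow F.inv (n + 1)) F.asEquivalence.counitIso

/-- The identification `F(F⁻¹(X)) ≅ X`. -/
noncomputable def funInvIso (X : A) : F.obj (F.inv.obj X) ≅ X := F.asEquivalence.counitIso.app X

lemma map_inv_map_comp_funInvIso_hom {X Y : A} (f : X ⟶ Y) :
    F.map (F.inv.map f) ≫ (funInvIso F Y).hom = (funInvIso F X).hom ≫ f :=
  F.asEquivalence.counit.naturality f

/-- The iterate `Gⁿ(X) ≅ X` of an isomorphism `G(X) ≅ X`. -/
def npowFixedIso {G : A ⥤ A} {X : A} (e : G.obj X ≅ X) : ∀ n : ℕ, (npow G n).obj X ≅ X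
  | 0 => Iso.refl X
  | n + 1 => G.mapIso (npowFixedIso e n) ≪≫ e

variable {F} {X : A} (e : F.obj X ≅ X)

/-- The isomorphism `F⁻¹(X) ≅ X` corresponding, under the full faithfulness of `F`, to the inverse
of `F(X) ≅ X`. -/
noncomputable def invFixedIso : F.inv.obj X ≅ X :=
  F.preimageIso (funInvIso F X ≪≫ e.symm)

/-- The iterate `Fⁿ(X) ≅ X`, for `n : ℤ`, of an isomorphism `F(X) ≅ X`. -/
noncomputable def zpowFixedIso : ∀ n : ℤ, (zpow F n).obj X ≅ X
  | Int.ofNat n => npowFixedIso e n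
  | Int.negSucc n => npowFixedIso (invFixedIso e) (n + 1)

lemma map_inv_map_comp_invFixedIso_hom_comp {Y : A} (f : Y ⟶ X) :
    F.map (F.inv.map f ≫ (invFixedIso e).hom) ≫ e.hom = (funInvIso F Y).hom ≫ f := by
  rw [F.map_comp, invFixedIso, F.preimageIso_hom, F.map_preimage, Iso.trans_hom, Iso.symm_hom,
    Category.assoc, Category.assoc, e.inv_hom_id, Category.comp_id, map_inv_map_comp_funInvIso_hom]

lemma map_zpowFixedIso_hom_comp : ∀ n : ℤ,
    F.map (zpowFixedIso e n).hom ≫ e.hom =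
      (zpowSuccIso F n).hom.app X ≫ (zpowFixedIso e (n + 1)).hom
  | Int.ofNat n => (Category.id_comp (npowFixedIso e (n + 1)).hom).symm
  | Int.negSucc 0 => map_inv_map_comp_invFixedIso_hom_comp e _
  | Int.negSucc (_ + 1) => map_inv_map_comp_invFixedIso_hom_comp e _

end Powers

namespace FCat

variable {A : Type u} [Category.{v} A] {F : A ⥤ A}

lemma comp_val {X Y Z : FCat F} (f : X ⟶ Y) (g : Y ⟶ Z) : (f ≫ g).1 = f.1 ≫ g.1 := rfl

lemma hom_ext {X Y : FCat F} {f g : X ⟶ Y} (h : f.1 = g.1) : f = g := Subtype.ext h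

instance : (forgetF F).Faithful := ⟨hom_ext⟩

instance : (forgetF F).ReflectsIsomorphisms where
  reflects {X Y} f hf := by
    have : IsIso f.1 := hf
    have inv_compat : Y.iso.hom ≫ F.map (inv f.1) = inv f.1 ≫ X.iso.hom := by
      rw [F.map_inv, IsIso.comp_inv_eq, Category.assoc, f.2, IsIso.inv_hom_id_assoc]
    exact ⟨⟨inv f.1, inv_compat⟩, hom_ext (IsIso.hom_inv_id f.1), hom_ext (IsIso.inv_hom_id f.1)⟩

lemma iso_hom_comp_map_comp_eq_of_fac {X Y Z : FCat F} {f : X.pt ⟶ Y.pt} (p : Y ⟶ Z) (q : X ⟶ Z)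
    (fac : f ≫ p.1 = q.1) :
    (X.iso.hom ≫ F.map f) ≫ F.map p.1 = (f ≫ Y.iso.hom) ≫ F.map p.1 := by
  rw [Category.assoc, Category.assoc, ← F.map_comp, p.2, fac, q.2, ← fac, Category.assoc]

lemma comp_iso_hom_comp_map_eq_of_fac {X Y Z : FCat F} {f : Y.pt ⟶ Z.pt} (p : X ⟶ Y) (q : X ⟶ Z)
    (fac : p.1 ≫ f = q.1) : p.1 ≫ Y.iso.hom ≫ F.map f = p.1 ≫ f ≫ Z.iso.hom := by
  rw [← Category.assoc, ← p.2, Category.assoc, ← F.map_comp, fac, q.2, ← fac, Category.assoc]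

variable (F) in
/-- The structural isomorphisms `Φ`, as a natural isomorphism `for_F ≅ F ∘ for_F`. -/
def structIso : forgetF F ≅ forgetF F ⋙ F :=
  NatIso.ofComponents (fun X => X.iso) fun f => f.2.symm

/-- The universal property of `F-A`: functors `B ⥤ F-A` correspond to functors `G : B ⥤ A` with an
isomorphism `G ≅ F ∘ G`. -/
def lift {B : Type*} [Category* B] (G : B ⥤ A) (e : G ≅ G ⋙ F) : B ⥤ FCat F where
  obj X := ⟨G.obj X, e.app X⟩
  map f := ⟨G.map f, (e.hom.naturality f).symm⟩

section CreatesLimits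

variable {J : Type*} [Category* J] (K : J ⥤ FCat F)

section Limit

variable {c : Cone (K ⋙ forgetF F)} (t : IsLimit c) [PreservesLimit (K ⋙ forgetF F) F]

/-- The lift to `F-A` of a limit cone in `A` preserved by `F`; its structural isomorphism is the
limit of those of the diagram. -/
noncomputable def liftedCone : Cone K where
  pt := ⟨c.pt, t.conePointsIsoOfNatIso (isLimitOfPreserves F t)
    (Functor.isoWhiskerLeft K (structIso F))⟩
  π :=
    { app j := ⟨c.π.app j, t.conePointsIsoOfNatIso_hom_comp (isLimitOfPreserves F t) _ j⟩
      naturality _ _ f := hom_ext (c.π.naturality f) }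

/-- The lift to `F-A` of a limit cone in `A` is a limit cone. -/
noncomputable def isLimitLiftedCone : IsLimit (liftedCone K t) where
  lift s := ⟨t.lift ((forgetF F).mapCone s), (isLimitOfPreserves F t).hom_ext fun j =>
    iso_hom_comp_map_comp_eq_of_fac ((liftedCone K t).π.app j) (s.π.app j)
      (t.fac ((forgetF F).mapCone s) j)⟩
  fac s j := hom_ext (t.fac ((forgetF F).mapCone s) j)
  uniq s m h := hom_ext (t.uniq ((forgetF F).mapCone s) m.1 fun j => congrArg Subtype.val (h j))

noncomputable instance : CreatesLimit K (forgetF F) :=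
  createsLimitOfReflectsIso fun _ t =>
    { liftedCone := liftedCone K t
      validLift := Cone.ext (Iso.refl _) fun _ => (Category.id_comp _).symm
      makesLimit := isLimitLiftedCone K t }

end Limit

section Colimit

variable {c : Cocone (K ⋙ forgetF F)} (t : IsColimit c) [PreservesColimit (K ⋙ forgetF F) F]

/-- The lift to `F-A` of a colimit cocone in `A` preserved by `F`; its structural isomorphism is the
colimit of those of the diagram. -/
noncomputable def liftedCocone : Cocone K where
  pt := ⟨c.pt, t.coconePointsIsoOfNatIso (isColimitOfPreserves F t)
    (Functor.isoWhiskerLeft K (structIso F))⟩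
  ι :=
    { app j :=
        ⟨c.ι.app j, (t.comp_coconePointsIsoOfNatIso_hom (isColimitOfPreserves F t)
          (Functor.isoWhiskerLeft K (structIso F)) j).symm⟩
      naturality _ _ f := hom_ext (c.ι.naturality f) }

/-- The lift to `F-A` of a colimit cocone in `A` is a colimit cocone. -/
noncomputable def isColimitLiftedCocone : IsColimit (liftedCocone K t) where
  desc s := ⟨t.desc ((forgetF F).mapCocone s), t.hom_ext fun j =>
    comp_iso_hom_comp_map_eq_of_fac ((liftedCocone K t).ι.app j) (s.ι.app j)
      (t.fac ((forgetF F).mapCocone s) j)⟩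
  fac s j := hom_ext (t.fac ((forgetF F).mapCocone s) j)
  uniq s m h := hom_ext (t.uniq ((forgetF F).mapCocone s) m.1 fun j => congrArg Subtype.val (h j))

noncomputable instance : CreatesColimit K (forgetF F) :=
  createsColimitOfReflectsIso fun _ t =>
    { liftedCocone := liftedCocone K t
      validLift := Cocone.ext (Iso.refl _) fun _ => Category.comp_id _
      makesColimit := isColimitLiftedCocone K t }

end Colimit

end CreatesLimits

section OfShape

variable {J : Type*} [Category* J]

noncomputable instance [PreservesLimitsOfShape J F] : CreatesLimitsOfShape J (forgetF F) where

noncomputable instance [PreservesColimitsOfShape J F] : CreatesColimitsOfShape J (forgetF F) where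

instance [HasLimitsOfShape J A] [PreservesLimitsOfShape J F] : HasLimitsOfShape J (FCat F) :=
  hasLimitsOfShape_of_hasLimitsOfShape_createsLimitsOfShape (forgetF F)

instance [HasColimitsOfShape J A] [PreservesColimitsOfShape J F] :
    HasColimitsOfShape J (FCat F) :=
  hasColimitsOfShape_of_hasColimitsOfShape_createsColimitsOfShape (forgetF F)

instance [HasFiniteLimits A] [PreservesFiniteLimits F] : HasFiniteLimits (FCat F) where
  out _ _ _ := inferInstance

instance [HasFiniteColimits A] [PreservesFiniteColimits F] : HasFiniteColimits (FCat F) where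
  out _ _ _ := inferInstance

instance [HasFiniteLimits A] [PreservesFiniteLimits F] : PreservesFiniteLimits (forgetF F) where
  preservesFiniteLimits _ _ _ := inferInstance

instance [HasFiniteColimits A] [PreservesFiniteColimits F] :
    PreservesFiniteColimits (forgetF F) where
  preservesFiniteColimits _ _ _ := inferInstance

instance [HasFiniteLimits A] [PreservesFiniteLimits F] [HasColimitsOfShape J A]
    [PreservesColimitsOfShape J F] [HasExactColimitsOfShape J A] :
    HasExactColimitsOfShape J (FCat F) :=
  HasExactColimitsOfShape.domain_of_functor J (forgetF F)

end OfShape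

section Abelian

instance [Preadditive A] [F.Additive] : Preadditive (FCat F) where
  homGroup X Y := inferInstanceAs <| AddCommGroup <|
    ((Preadditive.leftComp _ X.iso.hom).comp F.mapAddHom).eqLocus
      (Preadditive.rightComp _ Y.iso.hom)
  add_comp _ _ _ _ _ _ := hom_ext (Preadditive.add_comp _ _ _ _ _ _)
  comp_add _ _ _ _ _ _ := hom_ext (Preadditive.comp_add _ _ _ _ _ _)

instance [Preadditive A] [F.Additive] : (forgetF F).Additive where

noncomputable instance [Abelian A] [F.Additive] [PreservesFiniteLimits F]
    [PreservesFiniteColimits F] : Abelian (FCat F) :=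
  abelianOfConservativeExact (forgetF F)

end Abelian

section Free

variable [HasCoproductsOfShape ℤ A] (F) [F.IsEquivalence]

/-- The shift isomorphism `F(⊕ₙ Fⁿ(X)) ≅ ⊕ₙ Fⁿ(X)`, natural in `X`, which carries the `n`-th summand
to the `(n + 1)`-st. The coproduct of the functors `Fⁿ` is taken in `A ⥤ A`. -/
noncomputable def sigmaZpowShiftIso : (∐ zpow F) ⋙ F ≅ ∐ zpow F :=
  PreservesCoproduct.iso ((Functor.whiskeringRight A A A).obj F) (zpow F) ≪≫
    Sigma.whiskerEquiv (Equiv.addRight (1 : ℤ)) fun n => (zpowSuccIso F n).symm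

lemma whiskerRight_ι_comp_sigmaZpowShiftIso_hom (n : ℤ) :
    Functor.whiskerRight (Sigma.ι (zpow F) n) F ≫ (sigmaZpowShiftIso F).hom =
      (zpowSuccIso F n).hom ≫ Sigma.ι (zpow F) (n + 1) := by
  have ι_comp_iso_hom : Functor.whiskerRight (Sigma.ι (zpow F) n) F ≫
      (PreservesCoproduct.iso ((Functor.whiskeringRight A A A).obj F) (zpow F)).hom =
        Sigma.ι (fun k => zpow F k ⋙ F) n := by
    rw [← Iso.eq_comp_inv, PreservesCoproduct.inv_hom]
    exact (ι_comp_sigmaComparison ((Functor.whiskeringRight A A A).obj F) (zpow F) n).symm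
  rw [sigmaZpowShiftIso, Iso.trans_hom, reassoc_of% ι_comp_iso_hom]
  simp [Sigma.whiskerEquiv]

/-- The functor `(−)_F : A ⥤ F-A`, sending `X` to `⊕ₙ Fⁿ(X)` with the shift isomorphism. -/
noncomputable def free : A ⥤ FCat F := lift (∐ zpow F) (sigmaZpowShiftIso F).symm

/-- The underlying object of `X_F` is the coproduct of the objects `Fⁿ(X)`. -/
noncomputable def freeObjPtIso (X : A) :
    ((free F).obj X).pt ≅ ∐ fun n : ℤ => (zpow F n).obj X :=
  PreservesCoproduct.iso ((evaluation A A).obj X) (zpow F)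

/-- The inclusion of the `n`-th summand `Fⁿ(X)` into `X_F`. -/
noncomputable def freeι (X : A) (n : ℤ) : (zpow F n).obj X ⟶ ((free F).obj X).pt :=
  (Sigma.ι (zpow F) n).app X

/-- The inclusion of the summand `F⁰(X) = X` into `X_F`. -/
noncomputable def freeUnit (X : A) : X ⟶ ((free F).obj X).pt := freeι F X 0

variable {F}

lemma comp_freeUnit {X Y : A} (f : X ⟶ Y) :
    f ≫ freeUnit F Y = freeUnit F X ≫ ((free F).map f).1 :=
  (Sigma.ι (zpow F) 0).naturality f

lemma map_freeι_comp_iso_inv (X : A) (n : ℤ) :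
    F.map (freeι F X n) ≫ ((free F).obj X).iso.inv =
      (zpowSuccIso F n).hom.app X ≫ freeι F X (n + 1) :=
  congr_app (whiskerRight_ι_comp_sigmaZpowShiftIso_hom F n) X

variable (F) in
/-- `X_F`, as an object of `A`, is a coproduct of the `Fⁿ(X)`. -/
noncomputable def isColimitFreeCofan (X : A) :
    IsColimit (Cofan.mk ((free F).obj X).pt (freeι F X)) :=
  isColimitOfHasCoproductOfPreservesColimit ((evaluation A A).obj X) (zpow F)

/-- The morphism `X_F ⟶ (Y, Ψ)` assembled from morphisms `Fⁿ(X) ⟶ Y` compatible with `Ψ`. -/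
noncomputable def freeDesc {X : A} {Y : FCat F} (g : ∀ n, (zpow F n).obj X ⟶ Y.pt)
    (hg : ∀ n, F.map (g n) ≫ Y.iso.inv = (zpowSuccIso F n).hom.app X ≫ g (n + 1)) :
    (free F).obj X ⟶ Y :=
  ⟨Cofan.IsColimit.desc (isColimitFreeCofan F X) g, by
    rw [← Iso.eq_inv_comp, ← Category.assoc, ← Iso.comp_inv_eq]
    refine (isColimitOfHasCoproductOfPreservesColimit
      ((evaluation A A).obj X ⋙ F) (zpow F)).hom_ext fun ⟨n⟩ => ?_
    have fac (k : ℤ) : freeι F X k ≫ Cofan.IsColimit.desc (isColimitFreeCofan F X) g = g k :=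
      Cofan.IsColimit.fac (isColimitFreeCofan F X) g k
    change F.map (freeι F X n) ≫ F.map _ ≫ _ = F.map (freeι F X n) ≫ _ ≫ _
    rw [← Category.assoc, ← F.map_comp, fac, hg, ← Category.assoc, map_freeι_comp_iso_inv,
      Category.assoc, fac]⟩

lemma freeι_comp_freeDesc {X : A} {Y : FCat F} (g : ∀ n, (zpow F n).obj X ⟶ Y.pt)
    (hg : ∀ n, F.map (g n) ≫ Y.iso.inv = (zpowSuccIso F n).hom.app X ≫ g (n + 1)) (n : ℤ) :
    freeι F X n ≫ (freeDesc g hg).1 = g n :=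
  Cofan.IsColimit.fac (isColimitFreeCofan F X) g n

lemma map_freeι_comp {X : A} {Y : FCat F} (u : (free F).obj X ⟶ Y) (n : ℤ) :
    F.map (freeι F X n ≫ u.1) ≫ Y.iso.inv =
      (zpowSuccIso F n).hom.app X ≫ freeι F X (n + 1) ≫ u.1 := by
  have inv_compat : F.map u.1 ≫ Y.iso.inv = ((free F).obj X).iso.inv ≫ u.1 := by
    rw [Iso.comp_inv_eq, Category.assoc, Iso.eq_inv_comp, u.2]
  rw [F.map_comp, Category.assoc, inv_compat, ← Category.assoc, map_freeι_comp_iso_inv,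
    Category.assoc]

lemma free_hom_ext {X : A} {Y : FCat F} {u w : (free F).obj X ⟶ Y}
    (h : freeUnit F X ≫ u.1 = freeUnit F X ≫ w.1) : u = w := by
  have succ_iff (n : ℤ) : freeι F X (n + 1) ≫ u.1 = freeι F X (n + 1) ≫ w.1 ↔
      freeι F X n ≫ u.1 = freeι F X n ≫ w.1 := by
    rw [← cancel_epi ((zpowSuccIso F n).hom.app X), ← map_freeι_comp, ← map_freeι_comp,
      cancel_mono, F.map_injective.eq_iff]
  refine hom_ext (Cofan.IsColimit.hom_ext (isColimitFreeCofan F X) _ _ fun n => ?_)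
  induction n using Int.induction_on with
  | zero => exact h
  | succ n ih => exact (succ_iff n).2 ih
  | pred n ih => exact (succ_iff _).1 (by rwa [sub_add_cancel])

/-- The counit `(Y, Ψ)_F ⟶ (Y, Ψ)`, given on the summand `Fⁿ(Y)` by the iterate `Ψ⁻ⁿ`. -/
noncomputable def freeCounit (Y : FCat F) : (free F).obj Y.pt ⟶ Y :=
  freeDesc (fun n => (zpowFixedIso Y.iso.symm n).hom) (map_zpowFixedIso_hom_comp Y.iso.symm)

lemma freeUnit_comp_freeCounit (Y : FCat F) : freeUnit F Y.pt ≫ (freeCounit Y).1 = 𝟙 Y.pt :=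
  freeι_comp_freeDesc _ _ 0

lemma freeUnit_comp_free_map_comp_freeCounit {X : A} {Y : FCat F} (f : X ⟶ Y.pt) :
    freeUnit F X ≫ ((free F).map f ≫ freeCounit Y).1 = f := by
  rw [comp_val, ← Category.assoc, ← comp_freeUnit, Category.assoc, freeUnit_comp_freeCounit,
    Category.comp_id]

/-- The bijection `Hom(X_F, (Y, Ψ)) ≃ Hom(X, Y)` given by restriction to the summand `F⁰(X) = X`. -/
noncomputable def freeHomEquiv (X : A) (Y : FCat F) : ((free F).obj X ⟶ Y) ≃ (X ⟶ Y.pt) where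
  toFun u := freeUnit F X ≫ u.1
  invFun f := (free F).map f ≫ freeCounit Y
  left_inv _ := free_hom_ext (freeUnit_comp_free_map_comp_freeCounit _)
  right_inv f := freeUnit_comp_free_map_comp_freeCounit f

variable (F) in
/-- `(−)_F` is left adjoint to `for_F`. -/
noncomputable def freeAdjunction : free F ⊣ forgetF F :=
  Adjunction.mkOfHomEquiv
    { homEquiv := freeHomEquiv
      homEquiv_naturality_left_symm f g :=
        (congrArg (· ≫ freeCounit _) ((free F).map_comp f g)).trans (Category.assoc _ _ _)
      homEquiv_naturality_right _ _ := (Category.assoc _ _ _).symm }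

instance [HasExactColimitsOfShape (Discrete ℤ) A] : PreservesFiniteLimits (free F) := by
  have : PreservesFiniteLimits (free F ⋙ forgetF F) :=
    have (n : Discrete ℤ) : PreservesFiniteLimits ((Discrete.functor (zpow F)).obj n) :=
      inferInstanceAs (PreservesFiniteLimits (zpow F n.as))
    preservesFiniteLimits_colimit (Discrete.functor (zpow F))
  exact ⟨fun _ _ _ => preservesLimitsOfShape_of_reflects_of_preserves (free F) (forgetF F)⟩

end Free

end FCat

/-- Let `A` be a Grothendieck abelian category (abelian, cocomplete, with exact filtered
colimits (AB5) and a generator) and `F : A ⥤ A` an additive equivalence.  Then `F-A` is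
abelian and cocomplete, and there is a functor `(−)_F : A ⥤ F-A` whose underlying object at
`X` is the coproduct `⊕_{n ∈ ℤ} Fⁿ(X)` (with the canonical shift isomorphism), such that:
(i) `((−)_F, for_F)` is an adjoint pair; (ii) `(−)_F` is exact, and `for_F` sends injective
objects of `F-A` to injective objects of `A`; (iii) small filtered colimits exist in `F-A`
and commute with `for_F`; (iv) if `G` is a generator (separator) of `A` then `G_F` is a
generator of `F-A`; (v) `F-A` is a Grothendieck abelian category (abelian, cocomplete,
AB5, and with a generator). -/
theorem stmt8 {A : Type u} [Category.{v} A] [Abelian A] [HasColimits A] [AB5 A]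
    (hGen : ∃ G : A, IsSeparator G)
    (F : A ⥤ A) [F.Additive] [F.IsEquivalence] :
    ∃ (instAb : Abelian (FCat F)) (instColim : HasColimits (FCat F)),
      letI := instAb
      letI := instColim
      ∃ Lam : A ⥤ FCat F,
        (∀ X : A, Nonempty ((Lam.obj X).pt ≅ ∐ fun n : ℤ => (zpow F n).obj X)) ∧
        Nonempty (Lam ⊣ FCat.forgetF F) ∧
        PreservesFiniteLimits Lam ∧
        PreservesFiniteColimits Lam ∧
        (∀ I : FCat F, Injective I → Injective I.pt) ∧
        (∀ (J : Type v) [SmallCategory J] [IsFiltered J], HasColimitsOfShape J (FCat F)) ∧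
        (∀ (J : Type v) [SmallCategory J] [IsFiltered J],
          PreservesColimitsOfShape J (FCat.forgetF F)) ∧
        (∀ G : A, IsSeparator G → IsSeparator (Lam.obj G)) ∧
        AB5 (FCat F) ∧
        (∃ G' : FCat F, IsSeparator G') := by
  have : HasCoproducts.{0} A := hasCoproducts_shrink.{0, v}
  have : HasFiniteBiproducts A := HasFiniteBiproducts.of_hasFiniteProducts
  have : AB4 A := AB4.of_AB5 A
  have : AB4OfSize.{0} A := AB4OfSize_shrink.{0, v} A
  have adj := FCat.freeAdjunction F
  have : PreservesColimitsOfSize.{0, 0} (FCat.free F) := adj.leftAdjoint_preservesColimits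
  have isSeparator_free (G : A) (hG : IsSeparator G) : IsSeparator ((FCat.free F).obj G) :=
    isSeparator_obj_of_adjunction adj hG
  obtain ⟨G, hG⟩ := hGen
  have : HasColimits (FCat F) := ⟨fun _ _ => inferInstance⟩
  exact ⟨inferInstance, inferInstance, FCat.free F, fun X => ⟨FCat.freeObjPtIso F X⟩,
    ⟨adj⟩, inferInstance, ⟨fun _ _ _ => inferInstance⟩, adj.map_injective,
    fun _ _ _ => inferInstance, fun _ _ _ => inferInstance, isSeparator_free,
    ⟨fun _ _ _ => inferInstance⟩, _, isSeparator_free G hG⟩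
end
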